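/- Let X ⊆ ℕ^d be a monotone set, Q a complex polynomial in d variables, and φ a multiplier of H_d whose Taylor coefficients satisfy φ̂(n) = Q̂(n) for every n ∈ X. Then ‖Q(M_z^X)‖ ≤ ‖φ‖_{M(H_d)}, where the left-hand side is the operator norm on H_d(X). -/

import Mathlib

open scoped BigOperators ComplexConjugate

noncomputable section

namespace DruryArveson

/-- Multi-indices. -/
abbrev Idx (d : ℕ) := Fin d → ℕ

/-- The weight `β(n) = |n|!/n!`. -/
def beta (d : ℕ) (n : Idx d) : ℝ :=
  ((∑ j, n j).factorial : ℝ) / ∏ j, ((n j).factorial : ℝ)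

/-- standard basis multi-index `e_j`. -/
def e (d : ℕ) (j : Fin d) : Idx d := fun i => if i = j then 1 else 0

/-- A set `X ⊆ ℕ^d` is monotone if its complement is shift invariant. -/
def MonotoneSet (d : ℕ) (X : Set (Idx d)) : Prop :=
  ∀ n, n ∉ X → ∀ j, n + e d j ∉ X

/-- membership in the Drury–Arveson space (coefficientwise). -/
def MemHd (d : ℕ) (a : Idx d → ℂ) : Prop :=
  Summable fun n => ‖a n‖ ^ 2 / beta d n

/-- the Drury–Arveson norm. -/
def hdNorm (d : ℕ) (a : Idx d → ℂ) : ℝ :=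
  Real.sqrt (∑' n, ‖a n‖ ^ 2 / beta d n)

/-- the Drury–Arveson inner product. -/
def hdInner (d : ℕ) (a b : Idx d → ℂ) : ℂ :=
  ∑' n, a n * conj (b n) / (beta d n : ℂ)

/-- membership in `H_d(X)`. -/
def MemHdX (d : ℕ) (X : Set (Idx d)) (a : Idx d → ℂ) : Prop :=
  (∀ n ∉ X, a n = 0) ∧ MemHd d a

/-- membership in `ℓ²(X, β)`. -/
def MemL2 (d : ℕ) (X : Set (Idx d)) (g : Idx d → ℂ) : Prop :=
  (∀ n ∉ X, g n = 0) ∧ Summable fun n => ‖g n‖ ^ 2 * beta d n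

/-- the norm of `ℓ²(ℕ^d, β)`. -/
def l2Norm (d : ℕ) (g : Idx d → ℂ) : ℝ :=
  Real.sqrt (∑' n, ‖g n‖ ^ 2 * beta d n)

/-- the inner product of `ℓ²(ℕ^d, β)`. -/
def l2Inner (d : ℕ) (g h : Idx d → ℂ) : ℂ :=
  ∑' n, g n * conj (h n) * (beta d n : ℂ)

/-- the compressed backshift `B_j^X = P_X B_j|_{ℓ²(X,β)}`. -/
def BXop (d : ℕ) (X : Set (Idx d)) (j : Fin d) (g : Idx d → ℂ) : Idx d → ℂ :=
  X.indicator fun n => g (n + e d j)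

/-- ordered power `(T_1)^{k_1} ∘ ⋯ ∘ (T_d)^{k_d}` of a `d`-tuple of maps. -/
def opPow (d : ℕ) {α : Type*} (T : Fin d → (α → α)) (k : Idx d) : α → α :=
  (List.ofFn fun j => (T j)^[k j]).foldr (· ∘ ·) id

/-- multiplication by `z_j` on coefficients. -/
def Mop (d : ℕ) (j : Fin d) (a : Idx d → ℂ) : Idx d → ℂ :=
  fun n => if 0 < n j then a (n - e d j) else 0

/-- the compressed multiplication `M_j^X = P_X M_j|_{H_d(X)}`. -/
def MopX (d : ℕ) (X : Set (Idx d)) (j : Fin d) (a : Idx d → ℂ) : Idx d → ℂ :=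
  X.indicator (Mop d j a)

/-- the Taylor coefficients of a polynomial of `d` variables. -/
def Qhat (d : ℕ) (Q : MvPolynomial (Fin d) ℂ) (n : Idx d) : ℂ :=
  Q.coeff (Finsupp.equivFunOnFinite.symm n)

/-- `Q(T)` for a `d`-tuple of maps on the coefficient space. -/
def polyOp (d : ℕ) (Q : MvPolynomial (Fin d) ℂ)
    (T : Fin d → ((Idx d → ℂ) → (Idx d → ℂ))) (a : Idx d → ℂ) : Idx d → ℂ :=
  fun n => ∑ k ∈ Q.support, Q.coeff k * opPow d T (⇑k) a n

/-- operator norm of a map with respect to the `ℓ²(X,β)` norm. -/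
def opNormL2 (d : ℕ) (X : Set (Idx d)) (T : (Idx d → ℂ) → (Idx d → ℂ)) : ℝ :=
  sInf {C | 0 ≤ C ∧ ∀ g, MemL2 d X g → l2Norm d (T g) ≤ C * l2Norm d g}

/-- operator norm of a map with respect to the `H_d(X)` norm. -/
def opNormHdX (d : ℕ) (X : Set (Idx d)) (T : (Idx d → ℂ) → (Idx d → ℂ)) : ℝ :=
  sInf {C | 0 ≤ C ∧ ∀ a, MemHdX d X a → hdNorm d (T a) ≤ C * hdNorm d a}

/-- coefficients of the product `φ · f` of two power series. -/
def mconv (d : ℕ) (φ a : Idx d → ℂ) (m : Idx d) : ℂ :=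
  ∑ k ∈ Finset.Iic m, φ k * a (m - k)

/-- `φ` is a multiplier of `H_d`. -/
def IsMultiplier (d : ℕ) (φ : Idx d → ℂ) : Prop :=
  ∀ a, MemHd d a → MemHd d (mconv d φ a)

/-- the multiplier norm `‖φ‖_{M(H_d)}`. -/
def multNorm (d : ℕ) (φ : Idx d → ℂ) : ℝ :=
  sInf {C | 0 ≤ C ∧ ∀ a, MemHd d a → hdNorm d (mconv d φ a) ≤ C * hdNorm d a}

/-- `A^n = A_1^{n_1} ⋯ A_d^{n_d}` for a tuple of bounded operators. -/
def ApowCLM (d : ℕ) {H : Type*} [NormedAddCommGroup H] [NormedSpace ℂ H]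
    (A : Fin d → H →L[ℂ] H) (n : Idx d) : H →L[ℂ] H :=
  (List.ofFn fun j => A j ^ n j).prod

/-- `Q(A) = ∑ c_k A^k` for a tuple of bounded operators. -/
def QevalCLM (d : ℕ) {H : Type*} [NormedAddCommGroup H] [NormedSpace ℂ H]
    (A : Fin d → H →L[ℂ] H) (Q : MvPolynomial (Fin d) ℂ) : H →L[ℂ] H :=
  ∑ k ∈ Q.support, Q.coeff k • ApowCLM d A ⇑k

/-- monomial `z^n`. -/
def mpow (d : ℕ) (z : Fin d → ℂ) (n : Idx d) : ℂ := ∏ j, z j ^ n j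


open Classical in
/-- shift by `K` compressed to `X`. -/
def shiftX (d : ℕ) (X : Set (Idx d)) (K : Idx d) (a : Idx d → ℂ) : Idx d → ℂ :=
  X.indicator fun n => if K ≤ n then a (n - K) else 0

lemma MonotoneSet.down {d : ℕ} {X : Set (Idx d)} (hX : MonotoneSet d X) {n : Idx d}
    (hn : n ∈ X) {j : Fin d} (hj : 0 < n j) : n - e d j ∈ X := by
  by_contra h
  apply hX _ h j
  have : n - e d j + e d j = n := by
    funext i
    by_cases hi : i = j
    · subst hi
      simp [e]; omega
    · simp [e, hi]
  rwa [this]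

lemma MonotoneSet.up {d : ℕ} {X : Set (Idx d)} (hX : MonotoneSet d X) (j : Fin d) (r : ℕ)
    {n : Idx d} (hn : n ∉ X) : n + r • e d j ∉ X := by
  induction r with
  | zero => simpa using hn
  | succ r ih =>
    rw [succ_nsmul, ← add_assoc]
    exact hX _ ih j

lemma sum_e (d : ℕ) (k : Idx d) : ∑ j, k j • e d j = k := by
  funext i
  simp [Finset.sum_apply, e]

lemma MonotoneSet.of_le {d : ℕ} {X : Set (Idx d)} (hX : MonotoneSet d X) {k n : Idx d}
    (hkn : k ≤ n) (hn : n ∈ X) : k ∈ X := by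
  by_contra hk
  have key : ∀ (m : Idx d) (s : Finset (Fin d)), k + ∑ j ∈ s, m j • e d j ∉ X := by
    intro m s
    induction s using Finset.induction_on with
    | empty => simpa using hk
    | insert j s hj ih =>
      rw [Finset.sum_insert hj, add_comm (m j • e d j), ← add_assoc]
      exact hX.up j _ ih
  have := key (n - k) Finset.univ
  rw [sum_e, add_tsub_cancel_of_le hkn] at this
  exact this hn

lemma MopX_shiftX {d : ℕ} {X : Set (Idx d)} (hX : MonotoneSet d X) (K : Idx d)
    (a : Idx d → ℂ) (j : Fin d) :
    MopX d X j (shiftX d X K a) = shiftX d X (e d j + K) a := by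
  funext n
  unfold MopX shiftX
  by_cases hn : n ∈ X
  · rw [Set.indicator_of_mem hn, Set.indicator_of_mem hn]
    unfold Mop
    by_cases hj : 0 < n j
    · have he : e d j ≤ n := by
        intro i
        by_cases hi : i = j
        · subst hi; simpa [e] using Nat.succ_le_of_lt hj
        · simp [e, hi]
      rw [if_pos hj, Set.indicator_of_mem (hX.down hn hj)]
      have h1 : K ≤ n - e d j ↔ e d j + K ≤ n := by
        rw [le_tsub_iff_left he]
      simp only [tsub_tsub]
      by_cases hK : e d j + K ≤ n
      · rw [if_pos hK, if_pos (h1.2 hK)]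
      · rw [if_neg hK, if_neg (fun h => hK (h1.1 h))]
    · rw [if_neg hj, if_neg]
      intro h
      have := h j
      simp [e] at this
      omega
  · rw [Set.indicator_of_notMem hn, Set.indicator_of_notMem hn]

lemma MopX_iter_shiftX {d : ℕ} {X : Set (Idx d)} (hX : MonotoneSet d X) (K : Idx d)
    (a : Idx d → ℂ) (j : Fin d) (r : ℕ) :
    (MopX d X j)^[r] (shiftX d X K a) = shiftX d X (r • e d j + K) a := by
  induction r with
  | zero => simp
  | succ r ih =>
    rw [Function.iterate_succ_apply', ih, MopX_shiftX hX, succ_nsmul']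
    rw [add_assoc]

lemma opPow_MopX {d : ℕ} {X : Set (Idx d)} (hX : MonotoneSet d X) (k : Idx d)
    (a : Idx d → ℂ) (ha : ∀ n ∉ X, a n = 0) :
    opPow d (MopX d X) k a = shiftX d X k a := by
  have key : ∀ l : List (Fin d),
      (l.map fun j => (MopX d X j)^[k j]).foldr (· ∘ ·) id a
        = shiftX d X (l.map fun j => k j • e d j).sum a := by
    intro l
    induction l with
    | nil =>
      funext n
      by_cases hn : n ∈ X
      · simp [shiftX, hn]
      · simp [shiftX, hn, ha n hn]
    | cons j l ih =>
      simp only [List.map_cons, List.foldr_cons, Function.comp_apply, List.sum_cons]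
      rw [ih, MopX_iter_shiftX hX]
  unfold opPow
  rw [List.ofFn_eq_map, key, ← List.ofFn_eq_map, List.sum_ofFn, sum_e]

open Classical in
lemma polyOp_MopX {d : ℕ} {X : Set (Idx d)} (hX : MonotoneSet d X)
    (Q : MvPolynomial (Fin d) ℂ) (φ : Idx d → ℂ) (hφQ : ∀ n ∈ X, φ n = Qhat d Q n)
    (a : Idx d → ℂ) (ha : ∀ n ∉ X, a n = 0) :
    polyOp d Q (MopX d X) a = X.indicator (mconv d φ a) := by
  funext n
  unfold polyOp
  simp only [opPow_MopX hX _ a ha]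
  unfold shiftX
  by_cases hn : n ∈ X
  · simp only [Set.indicator_of_mem hn]
    unfold mconv
    have h1 : ∑ k ∈ Finset.Iic n, φ k * a (n - k)
        = ∑ k ∈ Finset.Iic n, Qhat d Q k * a (n - k) := by
      refine Finset.sum_congr rfl fun k hk => ?_
      rw [hφQ k (hX.of_le (Finset.mem_Iic.1 hk) hn)]
    rw [h1]
    simp only [mul_ite, mul_zero]
    rw [← Finset.sum_filter]
    refine Finset.sum_bij_ne_zero (fun k _ _ => (⇑k : Idx d)) ?_ ?_ ?_ ?_
    · intro k hk _
      exact Finset.mem_Iic.2 (Finset.mem_filter.1 hk).2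
    · intro k _ _ k' _ _ h
      exact DFunLike.coe_injective h
    · intro k hk hne
      refine ⟨Finsupp.equivFunOnFinite.symm k, ?_, ?_, ?_⟩
      · refine Finset.mem_filter.2 ⟨?_, Finset.mem_Iic.1 hk⟩
        rw [MvPolynomial.mem_support_iff]
        exact left_ne_zero_of_mul hne
      · exact hne
      · rfl
    · intro k _ _
      unfold Qhat
      congr 2
      ext; rfl
  · simp [Set.indicator_of_notMem hn]

lemma beta_pos (d : ℕ) (n : Idx d) : 0 < beta d n := by
  unfold beta
  exact div_pos (by exact_mod_cast Nat.factorial_pos _)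
    (Finset.prod_pos fun j _ => by exact_mod_cast Nat.factorial_pos _)

/-- the model of `H_d` as an `ℓ²` space. -/
abbrev L (d : ℕ) := lp (fun _ : Idx d => ℂ) 2

/-- square root of the weight. -/
def sb (d : ℕ) (n : Idx d) : ℂ := ((Real.sqrt (beta d n) : ℝ) : ℂ)

lemma sb_ne (d : ℕ) (n : Idx d) : sb d n ≠ 0 := by
  unfold sb
  exact_mod_cast (Real.sqrt_pos.2 (beta_pos d n)).ne'

lemma norm_sb_sq (d : ℕ) (n : Idx d) : ‖sb d n‖ ^ 2 = beta d n := by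
  unfold sb
  rw [Complex.norm_real, Real.norm_eq_abs, sq_abs, Real.sq_sqrt (beta_pos d n).le]

lemma norm_div_sb (d : ℕ) (a : Idx d → ℂ) (n : Idx d) :
    ‖a n / sb d n‖ ^ 2 = ‖a n‖ ^ 2 / beta d n := by
  rw [norm_div, div_pow, norm_sb_sq]

lemma memlp_iff (d : ℕ) (x : Idx d → ℂ) :
    Memℓp x 2 ↔ Summable fun n => ‖x n‖ ^ 2 := by
  rw [memℓp_gen_iff (by norm_num)]
  simp

lemma memHd_iff (d : ℕ) (a : Idx d → ℂ) :
    MemHd d a ↔ Memℓp (fun n => a n / sb d n) 2 := by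
  rw [memlp_iff]
  simp only [norm_div_sb]
  rfl

/-- the coefficients of an element of the model. -/
def coef (d : ℕ) (x : L d) : Idx d → ℂ := fun n => x n * sb d n

lemma coef_div (d : ℕ) (x : L d) : (fun n => coef d x n / sb d n) = ⇑x := by
  funext n
  exact mul_div_cancel_right₀ _ (sb_ne d n)

lemma memHd_coef (d : ℕ) (x : L d) : MemHd d (coef d x) := by
  rw [memHd_iff, coef_div]
  exact x.2

lemma hdNorm_eq (d : ℕ) (a : Idx d → ℂ) (x : L d) (h : ∀ n, x n = a n / sb d n) :
    hdNorm d a = ‖x‖ := by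
  rw [lp.norm_eq_tsum_rpow (by norm_num)]
  unfold hdNorm
  rw [Real.sqrt_eq_rpow]
  simp only [h]
  simp [← norm_div_sb]

/-- multiplication by `φ` on the model. -/
def multL (d : ℕ) (φ : Idx d → ℂ) (hφ : IsMultiplier d φ) : L d →ₗ[ℂ] L d where
  toFun x := ⟨fun n => mconv d φ (coef d x) n / sb d n,
    (memHd_iff d _).1 (hφ _ (memHd_coef d x))⟩
  map_add' x y := by
    ext n
    simp only [lp.coeFn_add, Pi.add_apply, mconv, coef, ← add_div, ← Finset.sum_add_distrib]
    congr 1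
    exact Finset.sum_congr rfl fun k _ => by ring
  map_smul' c x := by
    ext n
    simp only [lp.coeFn_smul, Pi.smul_apply, mconv, coef, smul_eq_mul, RingHom.id_apply,
      ← mul_div_assoc, Finset.mul_sum]
    congr 1
    exact Finset.sum_congr rfl fun k _ => by ring

lemma coord_tendsto (d : ℕ) {u : ℕ → L d} {x : L d}
    (h : Filter.Tendsto u Filter.atTop (nhds x)) (n : Idx d) :
    Filter.Tendsto (fun i => u i n) Filter.atTop (nhds (x n)) := by
  rw [tendsto_iff_norm_sub_tendsto_zero] at h ⊢
  refine squeeze_zero (fun _ => norm_nonneg _) (fun i => ?_) h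
  exact lp.norm_apply_le_norm (by norm_num) (u i - x) n

lemma multL_cont (d : ℕ) (φ : Idx d → ℂ) (hφ : IsMultiplier d φ) :
    Continuous (multL d φ hφ) := by
  refine LinearMap.continuous_of_seq_closed_graph (multL d φ hφ) fun u x y hu hy => ?_
  ext n
  refine tendsto_nhds_unique (coord_tendsto d hy n) ?_
  change Filter.Tendsto (fun i => mconv d φ (coef d (u i)) n / sb d n) _
    (nhds (mconv d φ (coef d x) n / sb d n))
  unfold mconv coef
  refine Filter.Tendsto.div_const (tendsto_finsetSum _ fun k _ => ?_) _
  exact ((coord_tendsto d hu _).mul_const _).const_mul _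

lemma mult_bounded (d : ℕ) (φ : Idx d → ℂ) (hφ : IsMultiplier d φ) :
    ∃ C, 0 ≤ C ∧ ∀ a, MemHd d a → hdNorm d (mconv d φ a) ≤ C * hdNorm d a := by
  let T : L d →L[ℂ] L d := ⟨multL d φ hφ, multL_cont d φ hφ⟩
  refine ⟨‖T‖, norm_nonneg _, fun a ha => ?_⟩
  let x : L d := ⟨fun n => a n / sb d n, (memHd_iff d a).1 ha⟩
  have hx : coef d x = a := by
    funext n
    exact div_mul_cancel₀ _ (sb_ne d n)
  rw [hdNorm_eq d a x fun _ => rfl, hdNorm_eq d (mconv d φ a) (T x)]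
  · exact T.le_opNorm x
  · intro n
    change mconv d φ (coef d x) n / sb d n = _
    rw [hx]

/-- Let `X ⊆ ℕ^d` be monotone, `Q` a complex polynomial of `d`
variables, and `φ` a multiplier of `H_d` with `φ̂(n) = Q̂(n)` for all `n ∈ X`.  Then
`‖Q(M_z^X)‖ ≤ ‖φ‖_{M(H_d)}`, the left-hand side being the operator norm on `H_d(X)`. -/
theorem norm_QMX_le_multiplier_norm (d : ℕ) (X : Set (Idx d)) (hX : MonotoneSet d X)
    (Q : MvPolynomial (Fin d) ℂ) (φ : Idx d → ℂ) (hφ : IsMultiplier d φ)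
    (hφQ : ∀ n ∈ X, φ n = Qhat d Q n) :
    opNormHdX d X (polyOp d Q (MopX d X)) ≤ multNorm d φ := by
  refine le_csInf (mult_bounded d φ hφ) ?_
  rintro C ⟨hC, h⟩
  refine csInf_le ⟨0, fun _ hb => hb.1⟩ ⟨hC, fun a ha => le_trans ?_ (h a ha.2)⟩
  rw [polyOp_MopX hX Q φ hφQ a ha.1]
  unfold hdNorm
  have hle : ∀ n, ‖X.indicator (mconv d φ a) n‖ ^ 2 / beta d n
      ≤ ‖mconv d φ a n‖ ^ 2 / beta d n := fun n => by
    have := beta_pos d n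
    gcongr
    exact norm_indicator_le_norm_self _ _
  have hs : Summable fun n => ‖mconv d φ a n‖ ^ 2 / beta d n := hφ a ha.2
  refine Real.sqrt_le_sqrt (Summable.tsum_le_tsum hle (Summable.of_nonneg_of_le (fun n => ?_) hle hs) hs)
  have := beta_pos d n
  positivity

end DruryArveson
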